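/- Let ρ ∈ (−1, 1), let f_ρ(z₁, z₂) = (1/(2π√(1−ρ²)))·exp(−(z₁² − 2ρz₁z₂ + z₂²)/(2(1−ρ²))) be the standard bivariate Gaussian density with correlation ρ, let φ(z) = (1/√(2π))·exp(−z²/2) and Φ(z) = ∫_{−∞}^z φ(t) dt. Fix real numbers a, b and set A = (b − ρa)/√(1−ρ²), B = (a − ρb)/√(1−ρ²), and Ω_{a,b} = ∫_a^∞ ∫_b^∞ f_ρ(z₁, z₂) dz₂ dz₁. Then ∫_a^∞ ∫_b^∞ z₁·z₂·f_ρ(z₁, z₂) dz₂ dz₁ = ρ·( a·φ(a)·(1 − Φ(A)) + b·φ(b)·(1 − Φ(B)) + Ω_{a,b} ) + (1 − ρ²)·f_ρ(a, b). -/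

import Mathlib

open Real

/-- The standard Gaussian probability density function. -/
noncomputable def stdGaussPDF (z : ℝ) : ℝ :=
  (1 / Real.sqrt (2 * Real.pi)) * Real.exp (-z ^ 2 / 2)

/-- The standard Gaussian cumulative distribution function. -/
noncomputable def stdGaussCDF (z : ℝ) : ℝ :=
  ∫ t in Set.Iic z, stdGaussPDF t

/-- The standard bivariate Gaussian density with correlation `ρ`. -/
noncomputable def bivGaussPDF (ρ z₁ z₂ : ℝ) : ℝ :=
  (1 / (2 * Real.pi * Real.sqrt (1 - ρ ^ 2))) *
    Real.exp (-(z₁ ^ 2 - 2 * ρ * z₁ * z₂ + z₂ ^ 2) / (2 * (1 - ρ ^ 2)))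

open MeasureTheory Filter Topology Set

lemma integrable_pow_mul_stdGaussPDF (n : ℕ) :
    Integrable (fun z : ℝ => z ^ n * stdGaussPDF z) := by
  have h := integrable_rpow_mul_exp_neg_mul_sq (b := 1 / 2) (by norm_num) (s := n)
    (by have := n.cast_nonneg (α := ℝ); linarith)
  refine (h.const_mul (1 / √(2 * π))).congr (ae_of_all _ fun z => ?_)
  simp only [stdGaussPDF, rpow_natCast]
  rw [show -(1 / 2 : ℝ) * z ^ 2 = -z ^ 2 / 2 by ring]
  ring

lemma integrable_stdGaussPDF : Integrable stdGaussPDF := by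
  simpa using integrable_pow_mul_stdGaussPDF 0

lemma continuous_stdGaussPDF : Continuous stdGaussPDF := by
  unfold stdGaussPDF
  fun_prop

lemma stdGaussPDF_nonneg (z : ℝ) : 0 ≤ stdGaussPDF z := by
  unfold stdGaussPDF
  positivity

lemma stdGaussPDF_le (z : ℝ) : stdGaussPDF z ≤ 1 / √(2 * π) := by
  unfold stdGaussPDF
  refine mul_le_of_le_one_right (by positivity) (exp_le_one_iff.mpr ?_)
  nlinarith [sq_nonneg z]

lemma integral_stdGaussPDF : ∫ z, stdGaussPDF z = 1 := by
  have h := integral_gaussian (1 / 2)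
  simp only [stdGaussPDF]
  rw [integral_const_mul]
  simp_rw [show ∀ z : ℝ, -z ^ 2 / 2 = -(1 / 2) * z ^ 2 from fun z => by ring]
  rw [h, show π / (1 / 2) = 2 * π by ring]
  exact one_div_mul_cancel (by positivity)

lemma hasDerivAt_stdGaussPDF (z : ℝ) : HasDerivAt stdGaussPDF (-z * stdGaussPDF z) z := by
  have h : HasDerivAt (fun z : ℝ => -z ^ 2 / 2) (-z) z :=
    ((hasDerivAt_pow 2 z).neg.div_const 2).congr_deriv (by push_cast; ring)
  refine (h.exp.const_mul (1 / √(2 * π))).congr_deriv ?_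
  unfold stdGaussPDF
  ring

lemma hasDerivAt_stdGaussCDF (x : ℝ) : HasDerivAt stdGaussCDF (stdGaussPDF x) x := by
  have h : stdGaussCDF = fun x => stdGaussCDF 0 + ∫ t in (0 : ℝ)..x, stdGaussPDF t := by
    ext x
    rw [← intervalIntegral.integral_Iic_sub_Iic integrable_stdGaussPDF.integrableOn
      integrable_stdGaussPDF.integrableOn]
    simp [stdGaussCDF]
  rw [h]
  exact (intervalIntegral.integral_hasDerivAt_right
    (continuous_stdGaussPDF.intervalIntegrable _ _)
    (continuous_stdGaussPDF.stronglyMeasurableAtFilter _ _)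
    continuous_stdGaussPDF.continuousAt).const_add _

lemma continuous_stdGaussCDF : Continuous stdGaussCDF :=
  continuous_iff_continuousAt.mpr fun x => (hasDerivAt_stdGaussCDF x).continuousAt

lemma tendsto_stdGaussCDF_atTop : Tendsto stdGaussCDF atTop (𝓝 1) := by
  have hc := aecover_Iic (μ := volume) (tendsto_id (α := ℝ) (x := atTop))
  have h := hc.integral_tendsto_of_countably_generated integrable_stdGaussPDF
  rwa [integral_stdGaussPDF] at h

lemma stdGaussCDF_nonneg (x : ℝ) : 0 ≤ stdGaussCDF x :=
  integral_nonneg stdGaussPDF_nonneg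

lemma stdGaussCDF_le_one (x : ℝ) : stdGaussCDF x ≤ 1 := by
  rw [← integral_stdGaussPDF]
  exact setIntegral_le_integral integrable_stdGaussPDF (ae_of_all _ stdGaussPDF_nonneg)

lemma bivGaussPDF_comm (ρ x y : ℝ) : bivGaussPDF ρ x y = bivGaussPDF ρ y x := by
  unfold bivGaussPDF
  congr 3
  ring

/-- The joint density is the marginal density times the conditional density. -/
lemma bivGaussPDF_eq_mul {ρ : ℝ} (hρ : 0 < 1 - ρ ^ 2) (x y : ℝ) :
    bivGaussPDF ρ x y =
      stdGaussPDF x * (stdGaussPDF ((y - ρ * x) / √(1 - ρ ^ 2)) / √(1 - ρ ^ 2)) := by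
  unfold bivGaussPDF stdGaussPDF
  have hs : 0 < √(1 - ρ ^ 2) := sqrt_pos.mpr hρ
  have hp : √(2 * π) * √(2 * π) = 2 * π := mul_self_sqrt (by positivity)
  have he : -(x ^ 2 - 2 * ρ * x * y + y ^ 2) / (2 * (1 - ρ ^ 2)) =
      -x ^ 2 / 2 + -((y - ρ * x) / √(1 - ρ ^ 2)) ^ 2 / 2 := by
    rw [div_pow, sq_sqrt hρ.le]
    field_simp
    ring
  rw [he, exp_add]
  generalize √(2 * π) = p at *
  have hp0 : p ≠ 0 := by
    rintro rfl
    linarith [pi_pos]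
  rw [← hp]
  field_simp

lemma integrable_pow_mul_bivGaussPDF {ρ : ℝ} (hρ : 0 < 1 - ρ ^ 2) (n : ℕ) (y : ℝ) :
    Integrable (fun x => x ^ n * bivGaussPDF ρ x y) := by
  have h : Integrable (fun x => x ^ n * stdGaussPDF x *
      (stdGaussPDF ((y - ρ * x) / √(1 - ρ ^ 2)) / √(1 - ρ ^ 2))) := by
    refine (integrable_pow_mul_stdGaussPDF n).mul_bdd
      (c := 1 / √(2 * π) / √(1 - ρ ^ 2)) ?_ (ae_of_all _ fun x => ?_)
    · exact ((continuous_stdGaussPDF.comp (by fun_prop)).div_const _).aestronglyMeasurable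
    · rw [norm_of_nonneg (div_nonneg (stdGaussPDF_nonneg _) (sqrt_nonneg _))]
      exact div_le_div_of_nonneg_right (stdGaussPDF_le _) (sqrt_nonneg _)
  refine h.congr (ae_of_all _ fun x => ?_)
  simp only [bivGaussPDF_eq_mul hρ x y]
  ring

lemma integrable_pow_mul_stdGaussPDF_mul_tail (n : ℕ) {u : ℝ → ℝ} (hu : Continuous u) :
    Integrable (fun x => x ^ n * stdGaussPDF x * (1 - stdGaussCDF (u x))) := by
  refine (integrable_pow_mul_stdGaussPDF n).mul_bdd (c := 1) ?_ (ae_of_all _ fun x => ?_)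
  · exact (continuous_const.sub (continuous_stdGaussCDF.comp hu)).aestronglyMeasurable
  · rw [norm_of_nonneg (sub_nonneg.mpr (stdGaussCDF_le_one _))]
    linarith [stdGaussCDF_nonneg (u x)]

lemma hasDerivAt_conditional_stdGaussCDF {ρ : ℝ} (hρ : 0 < 1 - ρ ^ 2) (x y : ℝ) :
    HasDerivAt (fun y => stdGaussPDF x * stdGaussCDF ((y - ρ * x) / √(1 - ρ ^ 2)))
      (bivGaussPDF ρ x y) y := by
  have hu : HasDerivAt (fun y => (y - ρ * x) / √(1 - ρ ^ 2)) (1 / √(1 - ρ ^ 2)) y :=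
    ((hasDerivAt_id y).sub_const _).div_const _
  refine (((hasDerivAt_stdGaussCDF _).comp y hu).const_mul (stdGaussPDF x)).congr_deriv ?_
  rw [bivGaussPDF_eq_mul hρ]
  ring

lemma tendsto_conditional_stdGaussCDF {ρ : ℝ} (hρ : 0 < 1 - ρ ^ 2) (x : ℝ) :
    Tendsto (fun y => stdGaussPDF x * stdGaussCDF ((y - ρ * x) / √(1 - ρ ^ 2))) atTop
      (𝓝 (stdGaussPDF x)) := by
  have hu : Tendsto (fun y => (y - ρ * x) / √(1 - ρ ^ 2)) atTop atTop :=
    (tendsto_atTop_add_const_right _ (-(ρ * x)) tendsto_id).atTop_div_const (sqrt_pos.mpr hρ)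
  simpa using (tendsto_stdGaussCDF_atTop.comp hu).const_mul (stdGaussPDF x)

lemma integral_Ioi_bivGaussPDF {ρ : ℝ} (hρ : 0 < 1 - ρ ^ 2) (x b : ℝ) :
    ∫ y in Ioi b, bivGaussPDF ρ x y =
      stdGaussPDF x * (1 - stdGaussCDF ((b - ρ * x) / √(1 - ρ ^ 2))) := by
  have hint : Integrable (fun y => bivGaussPDF ρ x y) := by
    simpa [bivGaussPDF_comm ρ x] using integrable_pow_mul_bivGaussPDF hρ 0 x
  rw [integral_Ioi_of_hasDerivAt_of_tendsto'
    (fun y _ => hasDerivAt_conditional_stdGaussCDF hρ x y) hint.integrableOn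
    (tendsto_conditional_stdGaussCDF hρ x)]
  ring

lemma hasDerivAt_bivGaussPDF {ρ : ℝ} (hρ : 0 < 1 - ρ ^ 2) (x y : ℝ) :
    HasDerivAt (fun y => (1 - ρ ^ 2) * bivGaussPDF ρ x y)
      (-(y - ρ * x) * bivGaussPDF ρ x y) y := by
  have hs : √(1 - ρ ^ 2) ^ 2 = 1 - ρ ^ 2 := sq_sqrt hρ.le
  have hs0 : √(1 - ρ ^ 2) ≠ 0 := (sqrt_pos.mpr hρ).ne'
  have hu : HasDerivAt (fun y => (y - ρ * x) / √(1 - ρ ^ 2)) (1 / √(1 - ρ ^ 2)) y :=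
    ((hasDerivAt_id y).sub_const _).div_const _
  simp_rw [bivGaussPDF_eq_mul hρ x]
  refine (((((hasDerivAt_stdGaussPDF _).comp y hu).div_const (√(1 - ρ ^ 2))).const_mul
    (stdGaussPDF x)).const_mul (1 - ρ ^ 2)).congr_deriv ?_
  generalize stdGaussPDF ((y - ρ * x) / √(1 - ρ ^ 2)) = q
  generalize √(1 - ρ ^ 2) = s at *
  rw [← hs]
  field_simp

/-- First moment of the second coordinate over a half-line. -/
lemma integral_Ioi_mul_bivGaussPDF {ρ : ℝ} (hρ : 0 < 1 - ρ ^ 2) (x b : ℝ) :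
    ∫ y in Ioi b, y * bivGaussPDF ρ x y =
      ρ * x * (stdGaussPDF x * (1 - stdGaussCDF ((b - ρ * x) / √(1 - ρ ^ 2)))) +
        (1 - ρ ^ 2) * bivGaussPDF ρ x b := by
  have h0 : Integrable (fun y => bivGaussPDF ρ x y) := by
    simpa [bivGaussPDF_comm ρ x] using integrable_pow_mul_bivGaussPDF hρ 0 x
  have h1 : Integrable (fun y => y * bivGaussPDF ρ x y) := by
    simpa [bivGaussPDF_comm ρ x] using integrable_pow_mul_bivGaussPDF hρ 1 x
  have hd : Integrable (fun y => -(y - ρ * x) * bivGaussPDF ρ x y) := by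
    refine ((h0.const_mul (ρ * x)).sub h1).congr (ae_of_all _ fun y => ?_)
    simp only [Pi.sub_apply]
    ring
  have hlim := tendsto_zero_of_hasDerivAt_of_integrableOn_Ioi (a := b)
    (fun y _ => hasDerivAt_bivGaussPDF hρ x y) hd.integrableOn (h0.const_mul _).integrableOn
  have hI := integral_Ioi_of_hasDerivAt_of_tendsto' (a := b)
    (fun y _ => hasDerivAt_bivGaussPDF hρ x y) hd.integrableOn hlim
  have hsplit : ∫ y in Ioi b, y * bivGaussPDF ρ x y =
      (∫ y in Ioi b, ρ * x * bivGaussPDF ρ x y) -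
        ∫ y in Ioi b, -(y - ρ * x) * bivGaussPDF ρ x y := by
    rw [← integral_sub (h0.const_mul _).integrableOn hd.integrableOn]
    congr 1 with y
    ring
  rw [hsplit, hI, integral_const_mul, integral_Ioi_bivGaussPDF hρ]
  ring

/-- Integration by parts for the second moment of the first coordinate over a quadrant. -/
lemma integral_Ioi_sq_mul_stdGaussPDF_mul_tail {ρ : ℝ} (hρ : 0 < 1 - ρ ^ 2) (a b : ℝ) :
    ∫ x in Ioi a, x ^ 2 * stdGaussPDF x * (1 - stdGaussCDF ((b - ρ * x) / √(1 - ρ ^ 2))) =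
      a * stdGaussPDF a * (1 - stdGaussCDF ((b - ρ * a) / √(1 - ρ ^ 2))) +
        (∫ x in Ioi a, stdGaussPDF x * (1 - stdGaussCDF ((b - ρ * x) / √(1 - ρ ^ 2)))) +
        ρ * ∫ x in Ioi a, x * bivGaussPDF ρ x b := by
  have hu : Continuous fun x => (b - ρ * x) / √(1 - ρ ^ 2) := by fun_prop
  have h0 : Integrable fun x =>
      stdGaussPDF x * (1 - stdGaussCDF ((b - ρ * x) / √(1 - ρ ^ 2))) := by
    simpa using integrable_pow_mul_stdGaussPDF_mul_tail 0 hu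
  have h1 : Integrable fun x =>
      x * stdGaussPDF x * (1 - stdGaussCDF ((b - ρ * x) / √(1 - ρ ^ 2))) := by
    simpa using integrable_pow_mul_stdGaussPDF_mul_tail 1 hu
  have h2 := integrable_pow_mul_stdGaussPDF_mul_tail 2 hu
  have hf : Integrable fun x => x * bivGaussPDF ρ x b := by
    simpa using integrable_pow_mul_bivGaussPDF hρ 1 b
  have hderiv : ∀ x ∈ Ici a, HasDerivAt
      (fun x => x * stdGaussPDF x * (1 - stdGaussCDF ((b - ρ * x) / √(1 - ρ ^ 2))))
      (stdGaussPDF x * (1 - stdGaussCDF ((b - ρ * x) / √(1 - ρ ^ 2))) +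
        ρ * (x * bivGaussPDF ρ x b) -
        x ^ 2 * stdGaussPDF x * (1 - stdGaussCDF ((b - ρ * x) / √(1 - ρ ^ 2)))) x := by
    intro x _
    have hu' : HasDerivAt (fun x => (b - ρ * x) / √(1 - ρ ^ 2)) (-(ρ * 1) / √(1 - ρ ^ 2)) x :=
      (((hasDerivAt_id x).const_mul ρ).const_sub b).div_const _
    refine (((hasDerivAt_id x).mul (hasDerivAt_stdGaussPDF x)).mul
      (((hasDerivAt_stdGaussCDF _).comp x hu').const_sub 1)).congr_deriv ?_
    rw [bivGaussPDF_eq_mul hρ]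
    simp only [id, Function.comp, Pi.mul_apply]
    ring
  have h3 : Integrable fun x =>
      stdGaussPDF x * (1 - stdGaussCDF ((b - ρ * x) / √(1 - ρ ^ 2))) +
        ρ * (x * bivGaussPDF ρ x b) := h0.add (hf.const_mul ρ)
  have hd := h3.sub h2
  have hlim := tendsto_zero_of_hasDerivAt_of_integrableOn_Ioi (a := a)
    (fun x hx => hderiv x (Ioi_subset_Ici_self hx)) hd.integrableOn h1.integrableOn
  have hI := integral_Ioi_of_hasDerivAt_of_tendsto' hderiv hd.integrableOn hlim
  rw [integral_sub h3.integrableOn h2.integrableOn,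
    integral_add h0.integrableOn (hf.const_mul ρ).integrableOn, integral_const_mul] at hI
  linarith

/-- The cross-moment formula of Theorem 1 of the paper: for a standardized bivariate
Gaussian pair with correlation `ρ ∈ (−1,1)` truncated to `[a,∞) × [b,∞)`,
`∫_a^∞ ∫_b^∞ z₁z₂ f_ρ(z₁,z₂) = ρ·(aφ(a)(1−Φ(A)) + bφ(b)(1−Φ(B)) + Ω_{a,b}) + (1−ρ²)f_ρ(a,b)`. -/
theorem bivariate_gaussian_truncated_cross_moment_std
    (ρ : ℝ) (hρ : ρ ∈ Set.Ioo (-1 : ℝ) 1) (a b : ℝ)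
    (A B Omega : ℝ)
    (hA : A = (b - ρ * a) / Real.sqrt (1 - ρ ^ 2))
    (hB : B = (a - ρ * b) / Real.sqrt (1 - ρ ^ 2))
    (hOmega : Omega = ∫ z₁ in Set.Ioi a, ∫ z₂ in Set.Ioi b, bivGaussPDF ρ z₁ z₂) :
    (∫ z₁ in Set.Ioi a, ∫ z₂ in Set.Ioi b, z₁ * z₂ * bivGaussPDF ρ z₁ z₂)
      = ρ * (a * stdGaussPDF a * (1 - stdGaussCDF A)
            + b * stdGaussPDF b * (1 - stdGaussCDF B) + Omega)
        + (1 - ρ ^ 2) * bivGaussPDF ρ a b := by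
  have hρ' : 0 < 1 - ρ ^ 2 := by nlinarith [hρ.1, hρ.2]
  subst hA hB hOmega
  have hu : Continuous fun x => (b - ρ * x) / √(1 - ρ ^ 2) := by fun_prop
  have hinner : ∀ x, ∫ y in Ioi b, x * y * bivGaussPDF ρ x y =
      ρ * (x ^ 2 * stdGaussPDF x * (1 - stdGaussCDF ((b - ρ * x) / √(1 - ρ ^ 2)))) +
        (1 - ρ ^ 2) * (x * bivGaussPDF ρ x b) := by
    intro x
    simp_rw [mul_assoc x]
    rw [integral_const_mul, integral_Ioi_mul_bivGaussPDF hρ']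
    ring
  have hf : Integrable fun x => x * bivGaussPDF ρ x b := by
    simpa using integrable_pow_mul_bivGaussPDF hρ' 1 b
  have hmoment : ∫ x in Ioi a, x * bivGaussPDF ρ x b =
      ρ * b * (stdGaussPDF b * (1 - stdGaussCDF ((a - ρ * b) / √(1 - ρ ^ 2)))) +
        (1 - ρ ^ 2) * bivGaussPDF ρ a b := by
    simp_rw [bivGaussPDF_comm ρ _ b]
    exact integral_Ioi_mul_bivGaussPDF hρ' b a
  simp_rw [hinner, integral_Ioi_bivGaussPDF hρ']
  rw [integral_add ((integrable_pow_mul_stdGaussPDF_mul_tail 2 hu).const_mul ρ).integrableOn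
      (hf.const_mul _).integrableOn, integral_const_mul, integral_const_mul,
    integral_Ioi_sq_mul_stdGaussPDF_mul_tail hρ', hmoment]
  ring
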